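/- Let v ∈ 𝔽ⁿ and t ∈ 𝔽^ℓ, where ℓ = ⌊log₂ n⌋ + 1. Then F(a^{(n)}(v), t) = 0 if and only if w(v) ≤ int(t). (This is the correctness of the weight-constraint encoding of the reduction from MLD to MQ: a vector v satisfies the weight constraint of the MLD instance exactly when the encoding polynomial vanishes at the weight counter a^{(n)}(v) and the bound t.) -/

import Mathlib

/-!
Two facts about words of bits, least significant first, carry the proof; both follow by induction on
the length, peeling off the most significant bit.

* `intval_increment`: adding a bit `b` with ripple carry, as the recursion of `acount` does, adds
  `b` to the integer value, up to a carry out of the top position. Since every prefix of `v` has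
  weight at most `n < 2 ^ (Nat.log 2 n + 1)`, that carry always vanishes, so the final counter is
  the binary expansion of the weight.
* `Fcomp_eq_zero_iff`: `Fcomp u t` is the bit `1 + t_j` at the top position `j` where `u` and `t`
  differ (and `0` if there is none), so it vanishes exactly when `intval u ≤ intval t`.
-/

/-- The weight-counter functions `a^{(i)} : 𝔽ⁿ → 𝔽^ℓ`, `ℓ = ⌊log₂ n⌋ + 1`, defined by
`a^{(0)}(v) = 0` and `a^{(i)}_j(v) = a^{(i-1)}_j(v) + (∏_{h<j} a^{(i-1)}_h(v))·v_i`
(indices of `v` are one-based in the paper; here `v_i` is `v ⟨i-1, _⟩`). -/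
def acount (n : ℕ) (v : Fin n → ZMod 2) : ℕ → Fin (Nat.log 2 n + 1) → ZMod 2
  | 0 => fun _ => 0
  | i + 1 => fun j =>
      acount n v i j +
        (∏ h ∈ Finset.Iio j, acount n v i h) * (if h : i < n then v ⟨i, h⟩ else 0)

/-- The Hamming weight of a vector over `𝔽₂`: the number of nonzero coordinates. -/
def hammingWt {m : ℕ} (v : Fin m → ZMod 2) : ℕ :=
  (Finset.univ.filter fun j => v j ≠ 0).card

/-- `int(a) = ∑_j a_j · 2^(j-1)` (one-based), i.e. the integer whose binary expansion,
least significant bit first, is `a`. -/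
def intval {l : ℕ} (a : Fin l → ZMod 2) : ℕ :=
  ∑ j, (a j).val * 2 ^ (j : ℕ)

/-- `g_h(u,t) = u_h + t_h`. -/
def gcomp {l : ℕ} (u t : Fin l → ZMod 2) (h : Fin l) : ZMod 2 := u h + t h

/-- `f_j(u,t) = g_j(u,t) · ∏_{h=j+1}^{l} (g_h(u,t) + 1)` (the empty product is `1`). -/
def fcomp {l : ℕ} (u t : Fin l → ZMod 2) (j : Fin l) : ZMod 2 :=
  gcomp u t j * ∏ h ∈ Finset.Ioi j, (gcomp u t h + 1)

/-- The comparison polynomial `F(u,t) = ∑_{j=1}^{l} f_j(u,t)·(t_j + 1)`. -/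
def Fcomp {l : ℕ} (u t : Fin l → ZMod 2) : ZMod 2 :=
  ∑ j, fcomp u t j * (t j + 1)

theorem intval_succ {l : ℕ} (a : Fin (l + 1) → ZMod 2) :
    intval a = intval (fun j : Fin l => a j.castSucc) + (a (Fin.last l)).val * 2 ^ l := by
  simp [intval, Fin.sum_univ_castSucc]

theorem intval_lt {l : ℕ} (a : Fin l → ZMod 2) : intval a < 2 ^ l := by
  induction l with
  | zero => simp [intval]
  | succ l ih =>
    rw [intval_succ, pow_succ]
    have h1 := ih (fun j : Fin l => a j.castSucc)
    have h2 : (a (Fin.last l)).val ≤ 1 := Nat.le_of_lt_succ (ZMod.val_lt _)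
    nlinarith [Nat.mul_le_mul_right (2 ^ l) h2]

theorem prod_Iio_castSucc {l : ℕ} (a : Fin (l + 1) → ZMod 2) (j : Fin l) :
    ∏ h ∈ Finset.Iio j.castSucc, a h = ∏ h ∈ Finset.Iio j, a h.castSucc := by
  rw [← Fin.map_castSuccEmb_Iio, Finset.prod_map]
  rfl

theorem prod_Iio_last {l : ℕ} (a : Fin (l + 1) → ZMod 2) :
    ∏ h ∈ Finset.Iio (Fin.last l), a h = ∏ h : Fin l, a h.castSucc := by
  rw [Fin.Iio_last_eq_map, Finset.prod_map]
  rfl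

/-- The bit `b * ∏ a_h` is the carry out of the top position. -/
theorem intval_increment {l : ℕ} (a : Fin l → ZMod 2) (b : ZMod 2) :
    intval (fun j => a j + (∏ h ∈ Finset.Iio j, a h) * b) + ((∏ h, a h) * b).val * 2 ^ l
      = intval a + b.val := by
  induction l with
  | zero => simp [intval]
  | succ l ih =>
    have h := ih (fun j : Fin l => a j.castSucc)
    rw [intval_succ, intval_succ a]
    simp only [prod_Iio_castSucc, prod_Iio_last, Fin.prod_univ_castSucc]
    generalize a (Fin.last l) = x at *
    generalize intval (fun j : Fin l => a j.castSucc) = A at *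
    rw [mul_right_comm]
    generalize (∏ h : Fin l, a h.castSucc) * b = c at *
    -- a half adder: `x + c` is the sum bit and `c * x` the carry bit
    have key : ∀ x c : ZMod 2, (x + c).val + 2 * (c * x).val = x.val + c.val := by decide
    have hk := congrArg (· * 2 ^ l) (key x c)
    rw [pow_succ]
    linarith

theorem Fcomp_succ {l : ℕ} (u t : Fin (l + 1) → ZMod 2) :
    Fcomp u t = Fcomp (fun j : Fin l => u j.castSucc) (fun j => t j.castSucc)
        * (u (Fin.last l) + t (Fin.last l) + 1)
      + (u (Fin.last l) + t (Fin.last l)) * (t (Fin.last l) + 1) := by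
  have hI (j : Fin l) : Finset.Ioi j.castSucc
      = Finset.cons (Fin.last l) ((Finset.Ioi j).map Fin.castSuccEmb) (by simp) := by
    ext i
    refine Fin.lastCases ?_ (fun i => ?_) i <;> simp [Fin.castSucc_lt_last, Fin.le_last]
  have hL : Finset.Ioi (Fin.last l) = ∅ := by
    ext i
    simp [Fin.le_last]
  simp only [Fcomp, fcomp, gcomp, Fin.sum_univ_castSucc, hI, hL, Finset.prod_cons,
    Finset.prod_map, Fin.coe_castSuccEmb, Finset.prod_empty, Finset.sum_mul, mul_one]
  congr 1
  refine Finset.sum_congr rfl fun j _ => ?_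
  ring

theorem Fcomp_eq_zero_iff {l : ℕ} (u t : Fin l → ZMod 2) :
    Fcomp u t = 0 ↔ intval u ≤ intval t := by
  induction l with
  | zero => simp [Fcomp, intval]
  | succ l ih =>
    have h := ih (fun j : Fin l => u j.castSucc) (fun j => t j.castSucc)
    have hu := intval_lt (fun j : Fin l => u j.castSucc)
    have ht := intval_lt (fun j : Fin l => t j.castSucc)
    rw [Fcomp_succ, intval_succ u, intval_succ t]
    generalize u (Fin.last l) = x at *
    generalize t (Fin.last l) = y at *
    generalize Fcomp (fun j : Fin l => u j.castSucc) (fun j => t j.castSucc) = f at *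
    have v0 : (0 : ZMod 2).val = 0 := rfl
    have v1 : (1 : ZMod 2).val = 1 := rfl
    have two : (1 : ZMod 2) + 1 = 0 := rfl
    have cases2 : ∀ z : ZMod 2, z = 0 ∨ z = 1 := by decide
    rcases cases2 x with rfl | rfl <;> rcases cases2 y with rfl | rfl <;>
      simp [v0, v1, two, h] <;> omega

/-- The counter after `i` steps holds the weight of the first `i` coordinates, written as a sum of
`ZMod.val`s. -/
theorem intval_acount (n : ℕ) (v : Fin n → ZMod 2) (i : ℕ) (hi : i ≤ n) :
    intval (acount n v i) = ∑ k ∈ Finset.range i, if h : k < n then (v ⟨k, h⟩).val else 0 := by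
  induction i with
  | zero => simp [intval, acount]
  | succ i ih =>
    have hin : i < n := hi
    have inc := intval_increment (acount n v i) (v ⟨i, hin⟩)
    have hrec : acount n v (i + 1) = fun j =>
        acount n v i j + (∏ h ∈ Finset.Iio j, acount n v i h) * v ⟨i, hin⟩ := by
      funext j
      simp [acount, hin]
    have hsum := Finset.sum_le_card_nsmul (Finset.range (i + 1))
      (fun k => if h : k < n then (v ⟨k, h⟩).val else 0) 1 (fun k _ => by
        split_ifs
        · exact Nat.le_of_lt_succ (ZMod.val_lt _)
        · exact zero_le_one)
    have hn : n < 2 ^ (Nat.log 2 n + 1) := Nat.lt_pow_succ_log_self one_lt_two n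
    rw [← hrec, ih hin.le] at inc
    rw [Finset.sum_range_succ] at hsum ⊢
    simp only [hin, dite_true, Finset.card_range, smul_eq_mul, mul_one] at hsum ⊢
    -- a carry out of the top position would make the weight at least `2 ^ (Nat.log 2 n + 1) > n`
    rcases Nat.eq_zero_or_pos ((∏ h, acount n v i h) * v ⟨i, hin⟩).val with h0 | h0
    · rw [h0] at inc
      omega
    · have := Nat.le_mul_of_pos_left (2 ^ (Nat.log 2 n + 1)) h0
      omega

theorem hammingWt_eq_sum {m : ℕ} (v : Fin m → ZMod 2) : hammingWt v = ∑ j, (v j).val := by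
  have key : ∀ z : ZMod 2, (if z ≠ 0 then 1 else 0) = z.val := by decide
  simp only [hammingWt, Finset.card_filter, key]

/-- (Correctness of the weight-constraint encoding.)  For `v ∈ 𝔽ⁿ` and
`t ∈ 𝔽^ℓ` with `ℓ = ⌊log₂ n⌋ + 1`: `F(a^{(n)}(v), t) = 0` if and only if
`w(v) ≤ int(t)`. -/
theorem weight_constraint_encoding (n : ℕ) (hn : 1 ≤ n) (v : Fin n → ZMod 2)
    (t : Fin (Nat.log 2 n + 1) → ZMod 2) :
    Fcomp (acount n v n) t = 0 ↔ hammingWt v ≤ intval t := by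
  rw [Fcomp_eq_zero_iff, intval_acount n v n le_rfl, hammingWt_eq_sum, Finset.sum_range]
  simp
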